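/- Tracked curves are geodesics (flat-space version of the Corollary to the main tracking theorem): let γ : ℝ → ℝ⁴ be smooth with η(γ'(t), γ'(t)) = 1 and γ'(t) future timelike for all t, and let 𝒞 be a collection of smooth fields T : ℝ⁴ → Matrix (Fin 4) (Fin 4) ℝ with symmetric values, each satisfying the dominant energy condition at every point and each divergence-free. If 𝒞 tracks γ, then γ''(t) = 0 for every t ∈ ℝ (γ is a straight line, i.e., a geodesic of Minkowski spacetime). -/

import Mathlib

open Matrix MeasureTheory Filter Topology

noncomputable section

abbrev Vec4 : Type := Fin 4 → ℝ
abbrev Mat4 : Type := Matrix (Fin 4) (Fin 4) ℝ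

/-- The Minkowski inner product on ℝ⁴. -/
def mink (x y : Vec4) : ℝ := x 0 * y 0 - x 1 * y 1 - x 2 * y 2 - x 3 * y 3

/-- The matrix diag(1,-1,-1,-1). -/
def E : Mat4 := Matrix.diagonal ![1, -1, -1, -1]

def FutureCausal (x : Vec4) : Prop := 0 ≤ mink x x ∧ 0 ≤ x 0
def FutureTimelike (x : Vec4) : Prop := 0 < mink x x ∧ 0 < x 0
def FutureNull (x : Vec4) : Prop := x ≠ 0 ∧ mink x x = 0 ∧ 0 < x 0
def UnitTimelike (x : Vec4) : Prop := FutureTimelike x ∧ mink x x = 1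

/-- The dominant energy condition for a matrix. -/
def DEC (T : Mat4) : Prop :=
  ∀ ξ ζ : Vec4, FutureCausal ξ → FutureCausal ζ → 0 ≤ ∑ i, ∑ j, ξ i * T i j * ζ j

/-- ⟨T, x⟩ = Σᵢⱼ T i j * x i j. -/
def minner (T x : Mat4) : ℝ := ∑ i, ∑ j, T i j * x i j

/-- The cone D of finite sums of symmetrized products of future causal vectors. -/
def coneD : Set Mat4 :=
  { x | ∃ (n : ℕ) (ξ ζ : Fin n → Vec4),
      (∀ k, FutureCausal (ξ k)) ∧ (∀ k, FutureCausal (ζ k)) ∧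
      x = ∑ k, (1/2 : ℝ) • (vecMulVec (ξ k) (ζ k) + vecMulVec (ζ k) (ξ k)) }

/-- A symmetric matrix is generic if it lies in the interior of D, taken within
the space of symmetric matrices. -/
def Generic (x : Mat4) : Prop :=
  ∃ h : xᵀ = x, (⟨x, h⟩ : { A : Mat4 // Aᵀ = A }) ∈
    interior { A : { A : Mat4 // Aᵀ = A } | A.val ∈ coneD }

/-- Partial derivative in the a-th coordinate direction. -/
def pd (a : Fin 4) (f : Vec4 → ℝ) (p : Vec4) : ℝ := fderiv ℝ f p (Pi.single a 1)

def SmoothMatField (T : Vec4 → Mat4) : Prop := ∀ a b, ContDiff ℝ (⊤ : ℕ∞) fun p => T p a b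
def SymValued (T : Vec4 → Mat4) : Prop := ∀ p, (T p)ᵀ = T p
def DivFree (T : Vec4 → Mat4) : Prop := ∀ p b, ∑ a, pd a (fun q => T q a b) p = 0

/-- A collection of fields tracks a curve. -/
def Tracks (C : Set (Vec4 → Mat4)) (γ : ℝ → Vec4) : Prop :=
  ∀ x : Vec4 → Mat4, SmoothMatField x → HasCompactSupport x → SymValued x →
    (∃ O : Set Vec4, IsOpen O ∧ Set.range γ ⊆ O ∧ ∀ p ∈ O, x p ∈ coneD) →
    (∃ t₀ : ℝ, Generic (x (γ t₀))) →
    ∃ T ∈ C, 0 < ∫ p, minner (T p) (x p)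

/-- Maxwell stress-energy tensor of a field strength matrix. -/
def maxwellT (F : Mat4) : Mat4 :=
  F * E * F - ((1/4 : ℝ) * (E * F * E * F).trace) • E

/-- Source-free Maxwell equations. -/
def SolvesMaxwell (F : Vec4 → Mat4) : Prop :=
  (∀ p b, ∑ a, E a a * pd a (fun q => F q a b) p = 0) ∧
  (∀ p a b c, pd a (fun q => F q b c) p + pd b (fun q => F q c a) p
      + pd c (fun q => F q a b) p = 0)

/-- Klein–Gordon stress-energy tensor. -/
def kgT (φ : Vec4 → ℝ) (m : ℝ) (p : Vec4) : Mat4 :=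
  Matrix.of fun a b =>
    pd a φ p * pd b φ p
      - (1/2 : ℝ) * E a b * ((∑ c, E c c * (pd c φ p)^2) - m^2 * (φ p)^2)

/-- Mass-m Klein–Gordon equation. -/
def SolvesKG (φ : Vec4 → ℝ) (m : ℝ) : Prop :=
  ∀ p, pd 0 (pd 0 φ) p - pd 1 (pd 1 φ) p - pd 2 (pd 2 φ) p - pd 3 (pd 3 φ) p
    + m^2 * φ p = 0

/-!
Divergence-free fields integrate to zero against every compactly supported symmetrized gradient, so
a tracked curve admits no test field `x = symGrad ω` which is in the dual cone near the curve and
generic at one of its points. If `a = γ'' t₀ ≠ 0` and `u = γ' t₀`, such a field is supported in a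
thin slab around `γ t₀`. Let `ℓ` and `m` be the rescaled coordinates of `p - γ t₀` along `u` and
`a`. For functions `A` and `β` of compact support,
`ω = (A ℓ - β' ℓ * m) dℓ + β ℓ dm` gives `symGrad ω = (A' ℓ - β'' ℓ * m) dℓ ⊗ dℓ`.
The curve satisfies `m ≈ -k ℓ² / 2` with `k = -⟨a, a⟩`, which is positive since `a` is spacelike, so
near the curve the coefficient is close to `A' + k τ² / 2 * β''` at `τ = ℓ`. The integral of this
function is `k ∫ β`, and there are no other constraints on it: it can be made nonnegative, and
strictly positive on the support of `β''`, precisely because `k > 0`.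
-/

section Minkowski

lemma mink_comm (x y : Vec4) : mink x y = mink y x := by
  simp only [mink]
  ring

lemma mink_smul_smul (c : ℝ) (x : Vec4) : mink (c • x) (c • x) = c ^ 2 * mink x x := by
  simp only [mink, Pi.smul_apply, smul_eq_mul]
  ring

lemma E_mulVec_dotProduct (x y : Vec4) : (E *ᵥ x) ⬝ᵥ y = mink x y := by
  simp only [E, mulVec_diagonal, dotProduct, Fin.sum_univ_four, mink, cons_val]
  ring

lemma mink_E_mulVec (x y : Vec4) : mink (E *ᵥ x) (E *ᵥ y) = mink x y := by
  simp [E, mulVec_diagonal, mink]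

lemma continuous_mink_self : Continuous fun x : Vec4 => mink x x := by
  unfold mink
  fun_prop

lemma hasDerivAt_mink {f g : ℝ → Vec4} {f' g' : Vec4} {t : ℝ} (hf : HasDerivAt f f' t)
    (hg : HasDerivAt g g' t) :
    HasDerivAt (fun s => mink (f s) (g s)) (mink f' (g t) + mink (f t) g') t := by
  rw [hasDerivAt_pi] at hf hg
  have h i := (hf i).fun_mul (hg i)
  exact ((((h 0).fun_sub (h 1)).fun_sub (h 2)).fun_sub (h 3)).congr_deriv (by
    simp only [mink]
    ring)

lemma mink_self_neg_of_orthogonal {u a : Vec4} (hu : 0 < mink u u) (h : mink u a = 0)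
    (ha : a ≠ 0) : mink a a < 0 := by
  set U := u 1 ^ 2 + u 2 ^ 2 + u 3 ^ 2 with hU
  set A := a 1 ^ 2 + a 2 ^ 2 + a 3 ^ 2 with hA
  have hu0 : U < u 0 ^ 2 := by
    simp only [mink] at hu
    linarith
  have hcauchy : (u 0 * a 0) ^ 2 ≤ U * A := by
    have htime : u 0 * a 0 = u 1 * a 1 + u 2 * a 2 + u 3 * a 3 := by
      simp only [mink] at h
      linarith
    simpa [htime, hU, hA, Fin.sum_univ_three] using
      Finset.sum_mul_sq_le_sq_mul_sq Finset.univ (fun i : Fin 3 => u i.succ) fun i => a i.succ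
  have hApos : 0 < A := by
    refine (by positivity : 0 ≤ A).lt_of_ne' fun hA0 => ha ?_
    have hspace : a 1 = 0 ∧ a 2 = 0 ∧ a 3 = 0 := by
      refine ⟨?_, ?_, ?_⟩ <;> nlinarith [sq_nonneg (a 1), sq_nonneg (a 2), sq_nonneg (a 3)]
    have hprod : u 0 * a 0 = 0 := by
      rw [hA0, mul_zero] at hcauchy
      exact pow_eq_zero_iff two_ne_zero |>.1 (hcauchy.antisymm (sq_nonneg _))
    have hu0' : u 0 ≠ 0 := fun h0 => by
      rw [h0] at hu0
      nlinarith [sq_nonneg (u 1), sq_nonneg (u 2), sq_nonneg (u 3)]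
    funext i
    fin_cases i
    exacts [(mul_eq_zero.1 hprod).resolve_left hu0', hspace.1, hspace.2.1, hspace.2.2]
  have hlt : a 0 ^ 2 < A := by
    by_contra! hle
    nlinarith [mul_lt_mul_of_pos_right hu0 hApos, mul_le_mul_of_nonneg_left hle (sq_nonneg (u 0))]
  simp only [mink]
  linarith

lemma mink_self_mul_mink_self_le_sq {u : Vec4} (hu : 0 < mink u u) (v : Vec4) :
    mink u u * mink v v ≤ mink u v ^ 2 := by
  set z := mink u u • v - mink u v • u with hz_def
  have hz : mink z z ≤ 0 := by
    rcases eq_or_ne z 0 with h0 | h0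
    · simp [h0, mink]
    · exact (mink_self_neg_of_orthogonal hu (by simp [hz_def, mink]; ring) h0).le
  have hzz : mink z z = mink u u * (mink u u * mink v v - mink u v ^ 2) := by
    simp only [hz_def, mink, Pi.sub_apply, Pi.smul_apply, smul_eq_mul]
    ring
  rw [hzz] at hz
  linarith [nonpos_of_mul_nonpos_right hz hu]

lemma one_le_abs_mink {u v : Vec4} (hu : mink u u = 1) (hv : mink v v = 1) : 1 ≤ |mink u v| := by
  rw [← one_le_sq_iff_one_le_abs]
  simpa [hu, hv] using mink_self_mul_mink_self_le_sq (u := u) (by simp [hu]) v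

lemma FutureCausal.smul {x : Vec4} (hx : FutureCausal x) {c : ℝ} (hc : 0 ≤ c) :
    FutureCausal (c • x) :=
  ⟨(mink_smul_smul c x).symm ▸ mul_nonneg (sq_nonneg c) hx.1, mul_nonneg hc hx.2⟩

lemma eventually_futureCausal {w : Vec4} (hw : FutureTimelike w) :
    ∀ᶠ v in 𝓝 w, FutureCausal v := by
  filter_upwards [continuous_mink_self.continuousAt.eventually (lt_mem_nhds hw.1),
    (continuous_apply (0 : Fin 4)).continuousAt.eventually (lt_mem_nhds hw.2)] with v h h0
  exact ⟨le_of_lt h, le_of_lt h0⟩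

lemma futureTimelike_or_futureTimelike_neg {w : Vec4} (hw : 0 < mink w w) :
    FutureTimelike w ∨ FutureTimelike (-w) := by
  have hneg : mink (-w) (-w) = mink w w := by simp [mink]
  have h0 : w 0 ≠ 0 := fun h0 => by
    simp only [mink, h0] at hw
    nlinarith [sq_nonneg (w 1), sq_nonneg (w 2), sq_nonneg (w 3)]
  rcases h0.lt_or_gt with h | h
  · exact .inr ⟨hneg ▸ hw, neg_pos.2 h⟩
  · exact .inl ⟨hw, h⟩

end Minkowski

section SymmetrizedProduct

variable {ι : Type*}

/-- The symmetrized tensor product of two vectors, in terms of which `coneD` is defined. -/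
def symProd (ξ ζ : ι → ℝ) : Matrix ι ι ℝ :=
  (1 / 2 : ℝ) • (vecMulVec ξ ζ + vecMulVec ζ ξ)

lemma symProd_apply (ξ ζ : ι → ℝ) (i j : ι) :
    symProd ξ ζ i j = (ξ i * ζ j + ζ i * ξ j) / 2 := by
  simp only [symProd, Matrix.smul_apply, Matrix.add_apply, vecMulVec_apply, smul_eq_mul]
  ring

lemma symProd_smul_left (c : ℝ) (ξ ζ : ι → ℝ) : symProd (c • ξ) ζ = c • symProd ξ ζ := by
  ext i j
  simp only [symProd_apply, Pi.smul_apply, Matrix.smul_apply, smul_eq_mul]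
  ring

lemma symProd_add_smul_add_symProd_sub_smul (w x y : ι → ℝ) (r s : ℝ) :
    symProd (w + r • x) (w + s • y) + symProd (w - r • x) (w - s • y) =
      (2 : ℝ) • (vecMulVec w w + (r * s) • symProd x y) := by
  ext i j
  simp only [symProd_apply, Matrix.add_apply, Matrix.smul_apply, vecMulVec_apply, Pi.add_apply,
    Pi.sub_apply, Pi.smul_apply, smul_eq_mul]
  ring

lemma eq_sum_symProd_single [Fintype ι] [DecidableEq ι] {M : Matrix ι ι ℝ} (hM : Mᵀ = M) :
    M = ∑ i, ∑ j, M i j • symProd (Pi.single i 1) (Pi.single j 1) := by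
  calc M = (1 / 2 : ℝ) • (M + Mᵀ) := by rw [hM]; module
    _ = _ := by
      conv_lhs => rw [matrix_eq_sum_single M]
      simp only [symProd, transpose_sum, transpose_single, ← Finset.sum_add_distrib,
        Finset.smul_sum, ← single_eq_single_vecMulVec_single, smul_add, smul_single, smul_eq_mul,
        mul_one, mul_comm (M _ _)]

end SymmetrizedProduct

section DualCone

/-- The cone `coneD` of the dual energy condition as a Mathlib cone. -/
def dualCone : PointedCone ℝ Mat4 where
  carrier := coneD
  zero_mem' := ⟨0, 0, 0, nofun, nofun, by simp⟩
  add_mem' := by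
    rintro _ _ ⟨n, ξ, ζ, hξ, hζ, rfl⟩ ⟨m, ξ', ζ', hξ', hζ', rfl⟩
    refine ⟨n + m, Fin.append ξ ξ', Fin.append ζ ζ', fun k => ?_, fun k => ?_, ?_⟩
    · induction k using Fin.addCases <;> simp [hξ, hξ']
    · induction k using Fin.addCases <;> simp [hζ, hζ']
    · simp [Fin.sum_univ_add]
  smul_mem' := by
    rintro ⟨c, hc⟩ _ ⟨n, ξ, ζ, hξ, hζ, rfl⟩
    refine ⟨n, fun k => c • ξ k, ζ, fun k => (hξ k).smul hc, hζ, ?_⟩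
    exact Finset.smul_sum.trans
      (Finset.sum_congr rfl fun k _ => (symProd_smul_left c (ξ k) (ζ k)).symm)

lemma symProd_mem_dualCone {ξ ζ : Vec4} (hξ : FutureCausal ξ) (hζ : FutureCausal ζ) :
    symProd ξ ζ ∈ dualCone :=
  ⟨1, fun _ => ξ, fun _ => ζ, fun _ => hξ, fun _ => hζ, by simp [symProd]⟩

lemma eventually_vecMulVec_self_add_smul_symProd_mem_dualCone {w : Vec4} (hw : FutureTimelike w)
    (x y : Vec4) : ∀ᶠ s : ℝ in 𝓝 0, vecMulVec w w + s • symProd x y ∈ dualCone := by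
  have hcausal (z : Vec4) :
      ∀ᶠ s : ℝ in 𝓝 0, FutureCausal (w + s • z) ∧ FutureCausal (w - s • z) := by
    have hadd : Tendsto (fun s : ℝ => w + s • z) (𝓝 0) (𝓝 w) :=
      Continuous.tendsto' (by fun_prop) _ _ (by simp)
    have hsub : Tendsto (fun s : ℝ => w - s • z) (𝓝 0) (𝓝 w) :=
      Continuous.tendsto' (by fun_prop) _ _ (by simp)
    exact (hadd.eventually (eventually_futureCausal hw)).and
      (hsub.eventually (eventually_futureCausal hw))
  obtain ⟨r, ⟨hx, hx'⟩, hr : 0 < r⟩ :=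
    (((hcausal x).filter_mono nhdsWithin_le_nhds).and self_mem_nhdsWithin).exists (f := 𝓝[>] 0)
  have hdiv : Tendsto (fun s : ℝ => s / r) (𝓝 0) (𝓝 0) :=
    Continuous.tendsto' (by fun_prop) _ _ (by simp)
  filter_upwards [hdiv.eventually (hcausal y)] with s ⟨hy, hy'⟩
  have h := dualCone.smul_mem (r := 1 / 2) (by norm_num)
    (add_mem (symProd_mem_dualCone hx hy) (symProd_mem_dualCone hx' hy'))
  rwa [symProd_add_smul_add_symProd_sub_smul, mul_div_cancel₀ _ hr.ne', smul_smul,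
    one_div_mul_cancel two_ne_zero, one_smul] at h

/-- This expresses that `vecMulVec w w` is an interior point of the cone: a small symmetric
perturbation is averaged over its 16 entries. -/
lemma eventually_vecMulVec_self_add_mem_dualCone {w : Vec4} (hw : FutureTimelike w) :
    ∀ᶠ M : Mat4 in 𝓝 0, Mᵀ = M → vecMulVec w w + M ∈ dualCone := by
  have hentry (i j : Fin 4) : ∀ᶠ M : Mat4 in 𝓝 0, vecMulVec w w +
      (16 * M i j) • symProd (Pi.single i 1) (Pi.single j 1) ∈ dualCone := by
    have : Tendsto (fun M : Mat4 => 16 * M i j) (𝓝 0) (𝓝 0) :=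
      Continuous.tendsto' (by fun_prop) _ _ (by simp)
    exact this.eventually (eventually_vecMulVec_self_add_smul_symProd_mem_dualCone hw _ _)
  filter_upwards [eventually_all.2 fun i => eventually_all.2 (hentry i)] with M hM hsymm
  have haverage : vecMulVec w w + M = ∑ i, ∑ j, (1 / 16 : ℝ) • (vecMulVec w w +
      (16 * M i j) • symProd (Pi.single i 1) (Pi.single j 1)) := by
    have hconst : ∑ _i : Fin 4, ∑ _j : Fin 4, (1 / 16 : ℝ) • vecMulVec w w = vecMulVec w w := by
      simp only [Fin.sum_univ_four]
      module
    simp only [smul_add, Finset.sum_add_distrib, hconst, smul_smul, ← mul_assoc,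
      one_div_mul_cancel (by norm_num : (16 : ℝ) ≠ 0), one_mul, ← eq_sum_symProd_single hsymm]
  rw [haverage]
  exact sum_mem fun i _ => sum_mem fun j _ => dualCone.smul_mem (by norm_num) (hM i j)

lemma Generic.mem_dualCone {x : Mat4} (hx : Generic x) : x ∈ dualCone := by
  obtain ⟨_, hint⟩ := hx
  have hmem := interior_subset hint
  exact hmem

lemma FutureTimelike.generic_vecMulVec_self {w : Vec4} (hw : FutureTimelike w) :
    Generic (vecMulVec w w) := by
  refine ⟨transpose_vecMulVec w w, mem_interior_iff_mem_nhds.2 ?_⟩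
  have hsub : Tendsto (fun A : { A : Mat4 // Aᵀ = A } => A.val - vecMulVec w w)
      (𝓝 ⟨vecMulVec w w, transpose_vecMulVec w w⟩) (𝓝 0) :=
    Continuous.tendsto' (by fun_prop) _ _ (sub_self _)
  filter_upwards [hsub.eventually (eventually_vecMulVec_self_add_mem_dualCone hw)] with A hA
  have hmem := hA (by rw [transpose_sub, A.2, transpose_vecMulVec])
  rwa [add_sub_cancel] at hmem

lemma generic_vecMulVec_self {w : Vec4} (hw : 0 < mink w w) : Generic (vecMulVec w w) := by
  rcases futureTimelike_or_futureTimelike_neg hw with h | h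
  · exact h.generic_vecMulVec_self
  · simpa using h.generic_vecMulVec_self

lemma generic_smul_vecMulVec_self {w : Vec4} (hw : 0 < mink w w) {c : ℝ} (hc : 0 < c) :
    Generic (c • vecMulVec w w) := by
  have hsqrt : c • vecMulVec w w = vecMulVec (√c • w) (√c • w) := by
    rw [smul_vecMulVec, vecMulVec_smul, smul_smul, Real.mul_self_sqrt hc.le]
  rw [hsqrt]
  exact generic_vecMulVec_self (by rw [mink_smul_smul]; positivity)

end DualCone

section SymmetrizedGradient

/-- The symmetrized gradient of a covector field with components `ω p b`. Its vanishing is Killing's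
equation in flat spacetime. -/
def symGrad (ω : Vec4 → Vec4) (p : Vec4) : Mat4 :=
  of fun a b => (pd a (fun q => ω q b) p + pd b (fun q => ω q a) p) / 2

lemma contDiff_pd {m n : WithTop ℕ∞} {f : Vec4 → ℝ} (hf : ContDiff ℝ n f) (hmn : m + 1 ≤ n)
    (a : Fin 4) : ContDiff ℝ m (pd a f) :=
  (hf.fderiv_right hmn).clm_apply contDiff_const

lemma integrable_mul_pd {f g : Vec4 → ℝ} (hf : Continuous f) (hg : ContDiff ℝ 1 g)
    (hc : HasCompactSupport g) (a : Fin 4) : Integrable fun p => f p * pd a g p :=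
  (hf.mul (contDiff_pd (m := 0) hg le_rfl a).continuous).integrable_of_hasCompactSupport
    (hc.fderiv_apply ℝ _).mul_left

lemma integrable_pd_mul {f g : Vec4 → ℝ} (hf : ContDiff ℝ 1 f) (hg : Continuous g)
    (hc : HasCompactSupport g) (a : Fin 4) : Integrable fun p => pd a f p * g p :=
  ((contDiff_pd (m := 0) hf le_rfl a).continuous.mul hg).integrable_of_hasCompactSupport
    hc.mul_left

lemma integral_mul_pd_eq_neg_pd_mul {f g : Vec4 → ℝ} (hf : ContDiff ℝ 1 f) (hg : ContDiff ℝ 1 g)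
    (hc : HasCompactSupport g) (a : Fin 4) :
    ∫ p, f p * pd a g p = -∫ p, pd a f p * g p :=
  integral_mul_fderiv_eq_neg_fderiv_mul_of_integrable (integrable_pd_mul hf hg.continuous hc a)
    (integrable_mul_pd hf.continuous hg hc a)
    ((hf.continuous.mul hg.continuous).integrable_of_hasCompactSupport hc.mul_left)
    (fun p _ => hf.differentiable one_ne_zero p) fun p _ => hg.differentiable one_ne_zero p

lemma smoothMatField_symGrad {ω : Vec4 → Vec4} (hω : ContDiff ℝ (⊤ : ℕ∞) ω) :
    SmoothMatField (symGrad ω) := fun a b =>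
  ((contDiff_pd (contDiff_pi.1 hω b) le_rfl a).add
    (contDiff_pd (contDiff_pi.1 hω a) le_rfl b)).div_const 2

lemma symValued_symGrad (ω : Vec4 → Vec4) : SymValued (symGrad ω) := fun p => by
  ext a b
  simp only [symGrad, transpose_apply, of_apply, add_comm]

lemma symGrad_congr {ω ω' : Vec4 → Vec4} {p : Vec4} (h : ω =ᶠ[𝓝 p] ω') :
    symGrad ω p = symGrad ω' p := by
  have hpd (a b : Fin 4) : pd a (fun q => ω q b) p = pd a (fun q => ω' q b) p := by
    have hb : (fun q => ω q b) =ᶠ[𝓝 p] fun q => ω' q b := h.fun_comp (· b)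
    rw [pd, pd, hb.fderiv_eq]
  simp only [symGrad, hpd]

lemma tsupport_symGrad_subset (ω : Vec4 → Vec4) : tsupport (symGrad ω) ⊆ tsupport ω := by
  refine closure_minimal (fun p hp => ?_) isClosed_closure
  contrapose! hp
  rw [Function.notMem_support, symGrad_congr (notMem_tsupport_iff_eventuallyEq.1 hp)]
  ext a b
  simp [symGrad, pd]

lemma symGrad_add {ω ω' : Vec4 → Vec4} {p : Vec4} (hω : DifferentiableAt ℝ ω p)
    (hω' : DifferentiableAt ℝ ω' p) :
    symGrad (fun q => ω q + ω' q) p = symGrad ω p + symGrad ω' p := by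
  rw [differentiableAt_pi] at hω hω'
  ext a b
  simp only [symGrad, pd, of_apply, Matrix.add_apply, Pi.add_apply, fderiv_fun_add (hω _) (hω' _),
    _root_.add_apply]
  ring

lemma symGrad_smul_const {f : Vec4 → ℝ} {p : Vec4} (hf : DifferentiableAt ℝ f p) (w : Vec4) :
    symGrad (fun q => f q • w) p = symProd (fun a => pd a f p) w := by
  ext a b
  simp only [symGrad, pd, symProd_apply, of_apply, Pi.smul_apply, smul_eq_mul,
    fderiv_mul_const hf, _root_.smul_apply]
  ring

lemma minner_symGrad {T : Mat4} (hT : Tᵀ = T) (ω : Vec4 → Vec4) (p : Vec4) :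
    minner T (symGrad ω p) = ∑ b, ∑ a, T a b * pd a (fun q => ω q b) p := by
  set D : Mat4 := of fun a b => pd a (fun q => ω q b) p
  have hsymGrad : symGrad ω p = (1 / 2 : ℝ) • (D + Dᵀ) := by
    ext a b
    simp [symGrad, D, div_eq_inv_mul]
  have hDT : ∑ a, ∑ b, T a b * D b a = ∑ a, ∑ b, T a b * D a b := by
    rw [Finset.sum_comm]
    exact Finset.sum_congr rfl fun a _ => Finset.sum_congr rfl fun b _ => by
      rw [← transpose_apply T, hT]
  calc minner T (symGrad ω p)
      = (1 / 2) * (∑ a, ∑ b, T a b * D a b + ∑ a, ∑ b, T a b * D b a) := by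
        simp only [minner, hsymGrad, Matrix.smul_apply, Matrix.add_apply, transpose_apply,
          smul_eq_mul, mul_add, Finset.mul_sum, Finset.sum_add_distrib, mul_left_comm]
    _ = ∑ a, ∑ b, T a b * D a b := by rw [hDT]; ring
    _ = ∑ b, ∑ a, T a b * pd a (fun q => ω q b) p := Finset.sum_comm

theorem integral_minner_symGrad_eq_zero {T : Vec4 → Mat4}
    (hT : ∀ a b, ContDiff ℝ 1 fun p => T p a b) (hsym : SymValued T) (hdiv : DivFree T)
    {ω : Vec4 → Vec4} (hω : ContDiff ℝ 1 ω) (hc : HasCompactSupport ω) :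
    ∫ p, minner (T p) (symGrad ω p) = 0 := by
  rw [contDiff_pi] at hω
  have hcb (b : Fin 4) : HasCompactSupport fun q => ω q b :=
    HasCompactSupport.comp_left (g := fun v : Vec4 => v b) hc rfl
  have hint (a b : Fin 4) := integrable_mul_pd (hT a b).continuous (hω b) (hcb b) a
  have hint' (a b : Fin 4) := integrable_pd_mul (hT a b) (hω b).continuous (hcb b) a
  calc ∫ p, minner (T p) (symGrad ω p)
      = ∑ b, ∑ a, ∫ p, T p a b * pd a (fun q => ω q b) p := by
        simp only [minner_symGrad (hsym _)]
        rw [integral_finsetSum _ fun b _ => integrable_finsetSum _ fun a _ => hint a b]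
        exact Finset.sum_congr rfl fun b _ => integral_finsetSum _ fun a _ => hint a b
    _ = -∑ b, ∫ p, (∑ a, pd a (fun q => T q a b) p) * ω p b := by
        simp only [fun a b => integral_mul_pd_eq_neg_pd_mul (hT a b) (hω b) (hcb b) a,
          Finset.sum_neg_distrib, Finset.sum_mul,
          fun b => integral_finsetSum _ fun a (_ : a ∈ Finset.univ) => hint' a b]
    _ = 0 := by simp only [hdiv _ _, zero_mul, integral_zero, Finset.sum_const_zero, neg_zero]

end SymmetrizedGradient

section Profile

lemma tsupport_subset_iff_of_isClosed {X M : Type*} [TopologicalSpace X] [Zero M] {f : X → M}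
    {s : Set X} (hs : IsClosed s) : tsupport f ⊆ s ↔ ∀ x ∉ s, f x = 0 :=
  hs.closure_subset_iff.trans Function.support_subset_iff'

lemma exists_deriv_eq_of_integral_eq_zero {f : ℝ → ℝ} (hf : ContDiff ℝ (⊤ : ℕ∞) f)
    {a b : ℝ} (hsupp : tsupport f ⊆ Set.Icc a b) (hint : ∫ t, f t = 0) :
    ∃ F : ℝ → ℝ, ContDiff ℝ (⊤ : ℕ∞) F ∧ deriv F = f ∧ tsupport F ⊆ Set.Icc a b := by
  set F : ℝ → ℝ := fun t => ∫ s in a..t, f s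
  have hF (t : ℝ) : HasDerivAt F (f t) t := (hf.continuous.integral_hasStrictDerivAt a t).hasDerivAt
  have hderiv : deriv F = f := funext fun t => (hF t).deriv
  have hsuppIoo : Function.support f ⊆ Set.Ioo a b := by
    rw [← interior_Icc]
    exact hf.continuous.isOpen_support.subset_interior_iff.2 ((subset_tsupport f).trans hsupp)
  refine ⟨F, contDiff_infty_iff_deriv.2 ⟨fun t => (hF t).differentiableAt, hderiv ▸ hf⟩, hderiv,
    (tsupport_subset_iff_of_isClosed isClosed_Icc).2 fun t ht => ?_⟩
  rw [Set.mem_Icc, not_and_or, not_le, not_le] at ht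
  rcases ht with hta | hbt
  · refine intervalIntegral.integral_zero_ae (.of_forall fun s hs => ?_)
    rw [Set.uIoc_of_ge hta.le] at hs
    exact Function.notMem_support.1 fun h => (hsuppIoo h).1.not_ge hs.2
  · exact (intervalIntegral.integral_eq_integral_of_support_subset fun s hs =>
      ⟨(hsuppIoo hs).1, ((hsuppIoo hs).2.trans hbt).le⟩).trans hint

/-- As `τ² / 2 * β'' = β - (τ * β - τ² / 2 * β')'`, the equation for `A` only asks for an
antiderivative of `h - k * β`. -/
lemma exists_deriv_add_mul_deriv_deriv_eq {h β : ℝ → ℝ} (hh : ContDiff ℝ (⊤ : ℕ∞) h)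
    (hβ : ContDiff ℝ (⊤ : ℕ∞) β) {a b : ℝ} (hsh : tsupport h ⊆ Set.Icc a b)
    (hsβ : tsupport β ⊆ Set.Icc a b) {k : ℝ} (hint : ∫ τ, h τ = k * ∫ τ, β τ) :
    ∃ A : ℝ → ℝ, ContDiff ℝ (⊤ : ℕ∞) A ∧ tsupport A ⊆ Set.Icc a b ∧
      ∀ τ, deriv A τ + k * τ ^ 2 / 2 * deriv (deriv β) τ = h τ := by
  have hβ' : ContDiff ℝ (⊤ : ℕ∞) (deriv β) := (contDiff_infty_iff_deriv.1 hβ).2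
  have hsβ' : tsupport (deriv β) ⊆ Set.Icc a b := tsupport_deriv_subset.trans hsβ
  have hint_sub : ∫ τ, (h τ - k * β τ) = 0 := by
    rw [integral_sub (hh.continuous.integrable_of_hasCompactSupport
      (isCompact_Icc.of_isClosed_subset (isClosed_tsupport h) hsh))
      ((hβ.continuous.integrable_of_hasCompactSupport
      (isCompact_Icc.of_isClosed_subset (isClosed_tsupport β) hsβ)).const_mul k),
      integral_const_mul, hint, sub_self]
  rw [tsupport_subset_iff_of_isClosed isClosed_Icc] at hsh hsβ hsβ'
  obtain ⟨P, hP, hP', hsP⟩ := exists_deriv_eq_of_integral_eq_zero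
    (hh.sub (contDiff_const.mul hβ)) (a := a) (b := b)
    ((tsupport_subset_iff_of_isClosed isClosed_Icc).2 fun τ hτ => by
      simp only [hsh τ hτ, hsβ τ hτ, mul_zero, sub_zero]) hint_sub
  rw [tsupport_subset_iff_of_isClosed isClosed_Icc] at hsP
  refine ⟨fun τ => P τ + k * (τ * β τ - τ ^ 2 / 2 * deriv β τ), by fun_prop,
    (tsupport_subset_iff_of_isClosed isClosed_Icc).2 fun τ hτ => ?_, fun τ => ?_⟩
  · simp only [hsP τ hτ, hsβ τ hτ, hsβ' τ hτ, mul_zero, sub_zero, add_zero]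
  · have hd := (hP.differentiable (by simp) τ).hasDerivAt.fun_add
      ((((hasDerivAt_id' τ).fun_mul (hβ.differentiable (by simp) τ).hasDerivAt).fun_sub
        (((hasDerivAt_pow 2 τ).div_const 2).fun_mul
          (hβ'.differentiable (by simp) τ).hasDerivAt)).const_mul k)
    rw [hd.deriv, hP']
    push_cast
    ring

lemma exists_pos_forall_mul_abs_le {X : Type*} [TopologicalSpace X] {g h : X → ℝ}
    (hg : Continuous g) (hc : HasCompactSupport g) (hh : Continuous h) (h0 : ∀ x, 0 ≤ h x)
    (hpos : ∀ x ∈ tsupport g, 0 < h x) : ∃ δ > 0, ∀ x, δ * |g x| ≤ h x := by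
  obtain ⟨m, hm, hmle⟩ := hc.isCompact.exists_forall_le' hh.continuousOn hpos
  obtain ⟨B, hB⟩ := hc.exists_bound_of_continuous hg
  refine ⟨m / (|B| + 1), by positivity, fun x => ?_⟩
  by_cases hx : x ∈ tsupport g
  · calc m / (|B| + 1) * |g x| ≤ m / (|B| + 1) * (|B| + 1) := by
          gcongr
          exact (hB x).trans ((le_abs_self B).trans (le_add_of_nonneg_right zero_le_one))
      _ = m := div_mul_cancel₀ _ (by positivity)
      _ ≤ h x := hmle x hx
  · rw [image_eq_zero_of_notMem_tsupport hx, abs_zero, mul_zero]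
    exact h0 x

lemma exists_profile {k : ℝ} (hk : 0 < k) :
    ∃ A β : ℝ → ℝ, ContDiff ℝ (⊤ : ℕ∞) A ∧ ContDiff ℝ (⊤ : ℕ∞) β ∧
      tsupport A ⊆ Set.Icc (-1) 1 ∧ tsupport β ⊆ Set.Icc (-1) 1 ∧ 0 < deriv A 0 ∧
      ∃ δ > 0, ∀ τ, δ * |deriv (deriv β) τ| ≤ deriv A τ + k * τ ^ 2 / 2 * deriv (deriv β) τ := by
  let inner : ContDiffBump (0 : ℝ) := ⟨1 / 4, 1 / 2, by norm_num, by norm_num⟩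
  let outer : ContDiffBump (0 : ℝ) := ⟨1 / 2, 1, by norm_num, by norm_num⟩
  set β := inner.normed volume
  set h : ℝ → ℝ := fun τ => k * outer.normed volume τ
  have hβ : ContDiff ℝ (⊤ : ℕ∞) β := inner.contDiff_normed
  have hh : ContDiff ℝ (⊤ : ℕ∞) h := contDiff_const.mul outer.contDiff_normed
  have hhpos {τ : ℝ} (hτ : τ ∈ Metric.ball 0 1) : 0 < h τ :=
    mul_pos hk (div_pos (outer.pos_of_mem_ball hτ) outer.integral_pos)
  have htsupport : tsupport β ⊆ Metric.ball 0 1 := by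
    rw [inner.tsupport_normed_eq]
    exact Metric.closedBall_subset_ball (by norm_num)
  have hIcc : Metric.closedBall (0 : ℝ) 1 = Set.Icc (-1) 1 := by
    rw [Real.closedBall_eq_Icc, zero_sub, zero_add]
  have hsβ : tsupport β ⊆ Set.Icc (-1) 1 := hIcc ▸ htsupport.trans Metric.ball_subset_closedBall
  have hsh : tsupport h ⊆ Set.Icc (-1) 1 :=
    tsupport_mul_subset_right.trans (outer.tsupport_normed_eq.trans hIcc).subset
  obtain ⟨A, hA, hsA, hAβ⟩ := exists_deriv_add_mul_deriv_deriv_eq hh hβ hsh hsβ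
    (by rw [integral_const_mul, outer.integral_normed, inner.integral_normed] : _ = k * _)
  refine ⟨A, β, hA, hβ, hsA, hsβ, ?_, ?_⟩
  · have hA0 : deriv A 0 = h 0 := by simpa using hAβ 0
    exact hA0 ▸ hhpos (Metric.mem_ball_self one_pos)
  · simp only [hAβ]
    exact exists_pos_forall_mul_abs_le
      (contDiff_infty_iff_deriv.1 (contDiff_infty_iff_deriv.1 hβ).2).2.continuous
      inner.hasCompactSupport_normed.deriv.deriv hh.continuous
      (fun τ => mul_nonneg hk.le (outer.nonneg_normed τ))
      fun τ hτ => hhpos (htsupport (tsupport_deriv_subset (tsupport_deriv_subset hτ)))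

end Profile

section ProfileField

variable {A β : ℝ → ℝ} {w v c : Vec4}

/-- A covector field supported in the slab over the supports of `A` and `β`, in terms of the affine
coordinates `ℓ = w ⬝ᵥ (p - c)` and `m = v ⬝ᵥ (p - c)`: the field `(A ℓ - β' ℓ * m) w + β ℓ v`. Its
coefficients are chosen so that the mixed terms of the symmetrized gradient cancel. -/
def profileField (A β : ℝ → ℝ) (w v c p : Vec4) : Vec4 :=
  (A (w ⬝ᵥ (p - c)) - deriv β (w ⬝ᵥ (p - c)) * (v ⬝ᵥ (p - c))) • w + β (w ⬝ᵥ (p - c)) • v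

lemma contDiff_dotProduct_sub (n : WithTop ℕ∞) (w c : Vec4) :
    ContDiff ℝ n fun p => w ⬝ᵥ (p - c) := by
  unfold dotProduct
  fun_prop

lemma pd_eq_of_hasDerivAt {f : Vec4 → ℝ} {p : Vec4} {a : Fin 4} {f' : ℝ}
    (hf : DifferentiableAt ℝ f p) (h : HasDerivAt (fun t : ℝ => f (p + t • Pi.single a 1)) f' 0) :
    pd a f p = f' :=
  hf.lineDeriv_eq_fderiv.symm.trans (HasLineDerivAt.lineDeriv h)

lemma hasDerivAt_dotProduct_add_smul_single_sub (w p c : Vec4) (a : Fin 4) :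
    HasDerivAt (fun t : ℝ => w ⬝ᵥ (p + t • Pi.single a 1 - c)) (w a) 0 := by
  have haffine (t : ℝ) : w ⬝ᵥ (p + t • Pi.single a 1 - c) = w ⬝ᵥ (p - c) + t * w a := by
    rw [add_sub_right_comm, dotProduct_add, dotProduct_smul, dotProduct_single_one, smul_eq_mul]
  simpa only [haffine, one_mul] using ((hasDerivAt_id' (0 : ℝ)).mul_const (w a)).const_add _

lemma contDiff_profileField (hA : ContDiff ℝ (⊤ : ℕ∞) A) (hβ : ContDiff ℝ (⊤ : ℕ∞) β) :
    ContDiff ℝ (⊤ : ℕ∞) (profileField A β w v c) := by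
  have hβ' := (contDiff_infty_iff_deriv.1 hβ).2
  have hdot (w' : Vec4) := contDiff_dotProduct_sub (⊤ : ℕ∞) w' c
  exact (((hA.comp (hdot w)).sub ((hβ'.comp (hdot w)).mul (hdot v))).smul contDiff_const).add
    ((hβ.comp (hdot w)).smul contDiff_const)

lemma tsupport_profileField_subset {s : Set ℝ} (hs : IsClosed s) (hA : tsupport A ⊆ s)
    (hβ : tsupport β ⊆ s) : tsupport (profileField A β w v c) ⊆ {p | w ⬝ᵥ (p - c) ∈ s} := by
  have hβ' : tsupport (deriv β) ⊆ s := tsupport_deriv_subset.trans hβ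
  rw [tsupport_subset_iff_of_isClosed hs] at hA hβ hβ'
  refine (tsupport_subset_iff_of_isClosed
    (hs.preimage (by fun_prop))).2 fun p hp => ?_
  simp only [profileField, hA _ hp, hβ _ hp, hβ' _ hp, zero_mul, sub_zero, zero_smul, add_zero]

lemma symGrad_profileField (hA : ContDiff ℝ 1 A) (hβ : ContDiff ℝ 2 β) (p : Vec4) :
    symGrad (profileField A β w v c) p =
      (deriv A (w ⬝ᵥ (p - c)) - deriv (deriv β) (w ⬝ᵥ (p - c)) * (v ⬝ᵥ (p - c))) •
        vecMulVec w w := by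
  have hβ' : ContDiff ℝ 1 (deriv β) := hβ.deriv'
  have hline := hasDerivAt_dotProduct_add_smul_single_sub (c := c) (p := p)
  have hdot (w' : Vec4) := contDiff_dotProduct_sub 1 w' c
  have hcoeff_w : DifferentiableAt ℝ
      (fun q => A (w ⬝ᵥ (q - c)) - deriv β (w ⬝ᵥ (q - c)) * (v ⬝ᵥ (q - c))) p :=
    ((hA.comp (hdot w)).sub ((hβ'.comp (hdot w)).mul (hdot v))).differentiable one_ne_zero p
  have hcoeff_v : DifferentiableAt ℝ (fun q => β (w ⬝ᵥ (q - c))) p :=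
    ((hβ.of_le one_le_two).comp (hdot w)).differentiable one_ne_zero p
  have hcomp {f : ℝ → ℝ} (hf : ContDiff ℝ 1 f) (a : Fin 4) :
      HasDerivAt (fun t : ℝ => f (w ⬝ᵥ (p + t • Pi.single a 1 - c)))
        (deriv f (w ⬝ᵥ (p - c)) * w a) 0 := by
    refine HasDerivAt.comp (0 : ℝ) ?_ (hline w a)
    simpa using (hf.differentiable one_ne_zero (w ⬝ᵥ (p - c))).hasDerivAt
  have hpd_w a := pd_eq_of_hasDerivAt hcoeff_w
    ((hcomp hA a).fun_sub ((hcomp hβ' a).fun_mul (hline v a)))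
  have hpd_v a := pd_eq_of_hasDerivAt hcoeff_v (hcomp (hβ.of_le one_le_two) a)
  unfold profileField
  rw [symGrad_add (hcoeff_w.smul_const w) (hcoeff_v.smul_const v), symGrad_smul_const hcoeff_w,
    symGrad_smul_const hcoeff_v]
  ext i j
  simp only [hpd_w, hpd_v, zero_smul, add_zero, symProd_apply, Matrix.add_apply,
    Matrix.smul_apply, vecMulVec_apply, smul_eq_mul]
  ring

lemma symGrad_profileField_mem_dualCone (hA : ContDiff ℝ 1 A) (hβ : ContDiff ℝ 2 β) {k δ : ℝ}
    (hδ : ∀ τ, δ * |deriv (deriv β) τ| ≤ deriv A τ + k * τ ^ 2 / 2 * deriv (deriv β) τ)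
    (hw : 0 < mink w w) {p : Vec4}
    (hp : |v ⬝ᵥ (p - c) + k * (w ⬝ᵥ (p - c)) ^ 2 / 2| ≤ δ) :
    symGrad (profileField A β w v c) p ∈ dualCone := by
  rw [symGrad_profileField hA hβ]
  refine dualCone.smul_mem ?_ (generic_vecMulVec_self hw).mem_dualCone
  set l := w ⬝ᵥ (p - c)
  set m := v ⬝ᵥ (p - c)
  have hmul : deriv (deriv β) l * (m + k * l ^ 2 / 2) ≤ δ * |deriv (deriv β) l| := by
    refine (le_abs_self _).trans ?_
    rw [abs_mul, mul_comm]
    exact mul_le_mul_of_nonneg_right hp (abs_nonneg _)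
  linarith [hδ l]

end ProfileField

section Tracking

variable {C : Set (Vec4 → Mat4)} {γ : ℝ → Vec4}

lemma not_tracks_of_hasCompactSupport
    (hC : ∀ T ∈ C, (∀ a b, ContDiff ℝ 1 fun p => T p a b) ∧ SymValued T ∧ DivFree T)
    {ω : Vec4 → Vec4} (hω : ContDiff ℝ (⊤ : ℕ∞) ω) (hc : HasCompactSupport ω) {O : Set Vec4}
    (hO : IsOpen O) (hγO : Set.range γ ⊆ O) (hcone : ∀ p ∈ O, symGrad ω p ∈ coneD) {t₀ : ℝ}
    (hgen : Generic (symGrad ω (γ t₀))) : ¬ Tracks C γ := fun htr => by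
  obtain ⟨T, hT, hpos⟩ := htr (symGrad ω) (smoothMatField_symGrad hω)
    (hc.of_isClosed_subset (isClosed_tsupport _) (tsupport_symGrad_subset ω)) (symValued_symGrad ω)
    ⟨O, hO, hγO, hcone⟩ ⟨t₀, hgen⟩
  obtain ⟨hsmooth, hsym, hdiv⟩ := hC T hT
  exact hpos.ne' (integral_minner_symGrad_eq_zero hsmooth hsym hdiv (hω.of_le (by simp)) hc)

lemma not_tracks_of_isBounded_range_inter_tsupport
    (hC : ∀ T ∈ C, (∀ a b, ContDiff ℝ 1 fun p => T p a b) ∧ SymValued T ∧ DivFree T)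
    {ω : Vec4 → Vec4} (hω : ContDiff ℝ (⊤ : ℕ∞) ω)
    (hb : Bornology.IsBounded (Set.range γ ∩ tsupport ω)) {O : Set Vec4}
    (hO : IsOpen O) (hγO : Set.range γ ⊆ O) (hcone : ∀ p ∈ O, symGrad ω p ∈ coneD) {t₀ : ℝ}
    (hgen : Generic (symGrad ω (γ t₀))) : ¬ Tracks C γ := by
  obtain ⟨R, hR, hsub⟩ := hb.subset_ball_lt 0 0
  let χ : ContDiffBump (0 : Vec4) := ⟨R, R + 1, hR, lt_add_one R⟩
  set U : Set Vec4 := Metric.ball 0 R ∪ (tsupport ω)ᶜ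
  have hU : IsOpen U := Metric.isOpen_ball.union (isClosed_tsupport ω).isOpen_compl
  have hγU : Set.range γ ⊆ U := fun p hp => or_iff_not_imp_right.2 fun h =>
    hsub ⟨hp, not_not.1 h⟩
  have hχω {p : Vec4} (hp : p ∈ U) : symGrad ((χ : Vec4 → ℝ) • ω) p = symGrad ω p := by
    refine symGrad_congr ?_
    rcases hp with hp | hp
    · filter_upwards [χ.eventuallyEq_one_of_mem_ball hp] with q hq
      rw [Pi.smul_apply', hq, Pi.one_apply, one_smul]
    · filter_upwards [notMem_tsupport_iff_eventuallyEq.1 hp] with q hq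
      rw [Pi.smul_apply', hq, Pi.zero_apply, smul_zero]
  refine not_tracks_of_hasCompactSupport hC (χ.contDiff.smul hω) χ.hasCompactSupport.smul_right
    (hO.inter hU) (Set.subset_inter hγO hγU) (fun p hp => ?_) (t₀ := t₀) ?_
  · exact (hχω hp.2).symm ▸ hcone p hp.1
  · rwa [hχω (hγU ⟨t₀, rfl⟩)]

theorem not_tracks_of_profileField
    (hC : ∀ T ∈ C, (∀ a b, ContDiff ℝ 1 fun p => T p a b) ∧ SymValued T ∧ DivFree T) {A β : ℝ → ℝ}
    (hA : ContDiff ℝ (⊤ : ℕ∞) A) (hβ : ContDiff ℝ (⊤ : ℕ∞) β) (hsA : tsupport A ⊆ Set.Icc (-1) 1)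
    (hsβ : tsupport β ⊆ Set.Icc (-1) 1) (hA0 : 0 < deriv A 0) {k δ : ℝ}
    (hδ : ∀ τ, δ * |deriv (deriv β) τ| ≤ deriv A τ + k * τ ^ 2 / 2 * deriv (deriv β) τ)
    {w v : Vec4} (hw : 0 < mink w w) {t₀ : ℝ}
    (hb : Bornology.IsBounded (Set.range γ ∩ {p | |w ⬝ᵥ (p - γ t₀)| ≤ 1}))
    (hγ : ∀ t, |w ⬝ᵥ (γ t - γ t₀)| ≤ 1 →
      |v ⬝ᵥ (γ t - γ t₀) + k * (w ⬝ᵥ (γ t - γ t₀)) ^ 2 / 2| < δ) :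
    ¬ Tracks C γ := by
  set ω := profileField A β w v (γ t₀)
  have hA1 : ContDiff ℝ 1 A := contDiff_infty.1 hA 1
  have hβ2 : ContDiff ℝ 2 β := contDiff_infty.1 hβ 2
  have hsω : tsupport ω ⊆ {p | |w ⬝ᵥ (p - γ t₀)| ≤ 1} := by
    simpa only [Set.mem_Icc, ← abs_le] using tsupport_profileField_subset isClosed_Icc hsA hsβ
  set O : Set Vec4 := (tsupport ω)ᶜ ∪
    {p | |v ⬝ᵥ (p - γ t₀) + k * (w ⬝ᵥ (p - γ t₀)) ^ 2 / 2| < δ}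
  have hO : IsOpen O :=
    (isClosed_tsupport ω).isOpen_compl.union (isOpen_lt (by fun_prop) continuous_const)
  have hcone : ∀ p ∈ O, symGrad ω p ∈ dualCone := by
    rintro p (hp | hp)
    · rw [image_eq_zero_of_notMem_tsupport fun h => hp (tsupport_symGrad_subset ω h)]
      exact zero_mem _
    · exact symGrad_profileField_mem_dualCone hA1 hβ2 hδ hw (le_of_lt hp)
  refine not_tracks_of_isBounded_range_inter_tsupport hC (contDiff_profileField hA hβ)
    (hb.subset (Set.inter_subset_inter_right _ hsω)) hO ?_ hcone (t₀ := t₀) ?_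
  · rintro _ ⟨t, rfl⟩
    exact or_iff_not_imp_left.2 fun h => hγ t (hsω (not_not.1 h))
  · rw [symGrad_profileField hA1 hβ2, sub_self, dotProduct_zero, dotProduct_zero, mul_zero,
      sub_zero]
    exact generic_smul_vecMulVec_self hw hA0

end Tracking

section Curve

lemma isLittleO_sq_of_hasDerivAt {f f' : ℝ → ℝ} {x₀ : ℝ} (hf : ∀ x, HasDerivAt f (f' x) x)
    (h0 : f x₀ = 0) (h1 : f' x₀ = 0) (h2 : HasDerivAt f' 0 x₀) :
    f =o[𝓝 x₀] fun x => (x - x₀) ^ 2 := by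
  have hf' : f' =o[𝓝 x₀] fun x => (x - x₀) ^ 1 := by
    simpa [h1] using hasDerivAt_iff_isLittleO.1 h2
  simpa [h0] using convex_univ.isLittleO_pow_succ_real (Set.mem_univ x₀)
    (fun x _ => (hf x).hasDerivWithinAt) (nhdsWithin_univ x₀ ▸ hf')

lemma mul_abs_sub_le_abs_image_sub {f : ℝ → ℝ} (hf : Differentiable ℝ f) {c : ℝ}
    (hc : ∀ x, c ≤ |deriv f x|) (x y : ℝ) : c * |x - y| ≤ |f x - f y| := by
  wlog hxy : x < y generalizing x y
  · rcases (not_lt.1 hxy).eq_or_lt with rfl | hyx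
    · simp
    · simpa only [abs_sub_comm] using this y x hyx
  obtain ⟨z, -, hz⟩ := exists_deriv_eq_slope f hxy hf.continuous.continuousOn hf.differentiableOn
  have hyx : 0 < |y - x| := abs_pos.2 (sub_pos.2 hxy).ne'
  rw [abs_sub_comm x, abs_sub_comm (f x), ← le_div_iff₀ hyx, ← abs_div, ← hz]
  exact hc z

lemma hasDerivAt_mink_sub {γ : ℝ → Vec4} {v : Vec4} {t : ℝ} (hγ : HasDerivAt γ v t) (x p : Vec4) :
    HasDerivAt (fun s => mink x (γ s - p)) (mink x v) t := by
  simpa [mink] using hasDerivAt_mink (hasDerivAt_const t x) (hγ.sub_const p)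

variable {γ : ℝ → Vec4}

lemma mink_deriv_deriv_deriv_eq_zero (hγ : ContDiff ℝ 2 γ) {c : ℝ}
    (hc : ∀ t, mink (deriv γ t) (deriv γ t) = c) (t : ℝ) :
    mink (deriv γ t) (deriv (deriv γ) t) = 0 := by
  have hγ'' := (hγ.deriv'.differentiable one_ne_zero t).hasDerivAt
  have h := (hasDerivAt_mink hγ'' hγ'').unique ((hasDerivAt_const t c).congr_of_eventuallyEq
    (.of_forall hc))
  rw [mink_comm] at h
  linarith

lemma abs_sub_le_abs_mink_sub (hγ : Differentiable ℝ γ)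
    (hunit : ∀ t, mink (deriv γ t) (deriv γ t) = 1) (t₀ t : ℝ) :
    |t - t₀| ≤ |mink (deriv γ t₀) (γ t - γ t₀)| := by
  have hderiv (s : ℝ) := hasDerivAt_mink_sub (hγ s).hasDerivAt (deriv γ t₀) (γ t₀)
  have hone (s : ℝ) := (hderiv s).deriv ▸ one_le_abs_mink (hunit t₀) (hunit s)
  simpa [mink] using mul_abs_sub_le_abs_image_sub (fun s => (hderiv s).differentiableAt) hone t t₀

/-- To second order the curve follows a parabola: for `x = γ t - γ t₀` and `s = t - t₀` one has
`⟨γ', x⟩ ≈ s` and `⟨γ'', x⟩ ≈ ⟨γ'', γ''⟩ s² / 2`. -/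
lemma isLittleO_mink_deriv_deriv_sub (hγ : ContDiff ℝ 2 γ)
    (hunit : ∀ t, mink (deriv γ t) (deriv γ t) = 1) (t₀ : ℝ) :
    (fun t => mink (deriv (deriv γ) t₀) (γ t - γ t₀) -
      mink (deriv (deriv γ) t₀) (deriv (deriv γ) t₀) * mink (deriv γ t₀) (γ t - γ t₀) ^ 2 / 2)
      =o[𝓝 t₀] fun t => (t - t₀) ^ 2 := by
  set u := deriv γ t₀
  set a := deriv (deriv γ) t₀
  have hdγ (t : ℝ) := (hγ.differentiable two_ne_zero t).hasDerivAt
  have hdγ' : HasDerivAt (deriv γ) a t₀ := (hγ.deriv'.differentiable one_ne_zero t₀).hasDerivAt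
  have hua : mink u a = 0 := mink_deriv_deriv_deriv_eq_zero hγ hunit t₀
  have hzero (x : Vec4) : mink x (γ t₀ - γ t₀) = 0 := by simp [mink]
  refine isLittleO_sq_of_hasDerivAt (f' := fun t => mink a (deriv γ t) -
      mink a a * (mink u (γ t - γ t₀) * mink u (deriv γ t))) (fun t => ?_) ?_ ?_ ?_
  · have hsq := ((hasDerivAt_mink_sub (hdγ t) u (γ t₀)).fun_pow 2).const_mul (mink a a)
    refine ((hasDerivAt_mink_sub (hdγ t) a _).fun_sub (hsq.div_const 2)).congr_deriv ?_
    push_cast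
    ring
  · rw [hzero, hzero, zero_pow two_ne_zero, mul_zero, zero_div, sub_zero]
  · simp only [hzero, zero_mul, mul_zero, sub_zero]
    exact (mink_comm a u).trans hua
  · have hderiv (x : Vec4) : HasDerivAt (fun t => mink x (deriv γ t)) (mink x a) t₀ := by
      simpa using hasDerivAt_mink_sub hdγ' x 0
    refine ((hderiv a).fun_sub (((hasDerivAt_mink_sub (hdγ t₀) u _).fun_mul
      (hderiv u)).const_mul (mink a a))).congr_deriv ?_
    simp only [hzero, zero_mul, add_zero]
    rw [show mink u (deriv γ t₀) = 1 from hunit t₀]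
    ring

lemma exists_pos_forall_abs_mink_le_imp (hγ : ContDiff ℝ 2 γ)
    (hunit : ∀ t, mink (deriv γ t) (deriv γ t) = 1) (t₀ : ℝ) {δ : ℝ} (hδ : 0 < δ) :
    ∃ r > 0, ∀ t, |mink (deriv γ t₀) (γ t - γ t₀)| ≤ r → |t - t₀| ≤ r ∧
      |mink (deriv (deriv γ) t₀) (γ t - γ t₀) - mink (deriv (deriv γ) t₀) (deriv (deriv γ) t₀) *
        mink (deriv γ t₀) (γ t - γ t₀) ^ 2 / 2| < δ * r ^ 2 := by
  obtain ⟨ε, hε, hlittleO⟩ := Metric.eventually_nhds_iff.1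
    ((isLittleO_mink_deriv_deriv_sub hγ hunit t₀).def (half_pos hδ))
  refine ⟨ε / 2, half_pos hε, fun t ht => ?_⟩
  have htr : |t - t₀| ≤ ε / 2 :=
    (abs_sub_le_abs_mink_sub (hγ.differentiable two_ne_zero) hunit t₀ t).trans ht
  refine ⟨htr, (hlittleO (htr.trans_lt (half_lt_self hε))).trans_lt ?_⟩
  rw [norm_pow, Real.norm_eq_abs]
  calc δ / 2 * |t - t₀| ^ 2 ≤ δ / 2 * (ε / 2) ^ 2 := by gcongr
    _ < δ * (ε / 2) ^ 2 := by gcongr; exact half_lt_self hδ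

lemma exists_rescaled_covectors (hγ : ContDiff ℝ 2 γ)
    (hunit : ∀ t, mink (deriv γ t) (deriv γ t) = 1) (t₀ : ℝ) {δ : ℝ} (hδ : 0 < δ) :
    ∃ w v : Vec4, 0 < mink w w ∧
      Bornology.IsBounded (Set.range γ ∩ {p | |w ⬝ᵥ (p - γ t₀)| ≤ 1}) ∧
      ∀ t, |w ⬝ᵥ (γ t - γ t₀)| ≤ 1 → |v ⬝ᵥ (γ t - γ t₀) -
        mink (deriv (deriv γ) t₀) (deriv (deriv γ) t₀) * (w ⬝ᵥ (γ t - γ t₀)) ^ 2 / 2| < δ := by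
  obtain ⟨r, hr, hscale⟩ := exists_pos_forall_abs_mink_le_imp hγ hunit t₀ hδ
  set u := deriv γ t₀
  set a := deriv (deriv γ) t₀
  have hw (x : Vec4) : (r⁻¹ • (E *ᵥ u)) ⬝ᵥ x = mink u x / r := by
    rw [smul_dotProduct, E_mulVec_dotProduct, smul_eq_mul, inv_mul_eq_div]
  have hv (x : Vec4) : ((r ^ 2)⁻¹ • (E *ᵥ a)) ⬝ᵥ x = mink a x / r ^ 2 := by
    rw [smul_dotProduct, E_mulVec_dotProduct, smul_eq_mul, inv_mul_eq_div]
  have hslab {x : Vec4} : |(r⁻¹ • (E *ᵥ u)) ⬝ᵥ x| ≤ 1 ↔ |mink u x| ≤ r := by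
    rw [hw, abs_div, abs_of_pos hr, div_le_one hr]
  refine ⟨r⁻¹ • (E *ᵥ u), (r ^ 2)⁻¹ • (E *ᵥ a), ?_, ?_, fun t ht => ?_⟩
  · rw [mink_smul_smul, mink_E_mulVec, hunit]
    positivity
  · suffices hsub : Set.range γ ∩ _ ⊆ γ '' Set.Icc (t₀ - r) (t₀ + r) from
      (isCompact_Icc.image hγ.continuous).isBounded.subset hsub
    rintro _ ⟨⟨t, rfl⟩, ht⟩
    exact ⟨t, Set.mem_Icc_iff_abs_le.1 (abs_sub_comm t t₀ ▸ (hscale t (hslab.1 ht)).1), rfl⟩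
  · have hcoord (x y : ℝ) : x / r ^ 2 - mink a a * (y / r) ^ 2 / 2 =
        (x - mink a a * y ^ 2 / 2) / r ^ 2 := by ring
    rw [hv, hw, hcoord, abs_div, abs_of_pos (pow_pos hr 2), div_lt_iff₀ (pow_pos hr 2)]
    exact (hscale t (hslab.1 ht)).2

end Curve

theorem tracking_implies_geodesic_general {γ : ℝ → Vec4} (hγ : ContDiff ℝ 2 γ)
    (hunit : ∀ t, mink (deriv γ t) (deriv γ t) = 1) {C : Set (Vec4 → Mat4)}
    (hC : ∀ T ∈ C, (∀ a b, ContDiff ℝ 1 fun p => T p a b) ∧ SymValued T ∧ DivFree T)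
    (htr : Tracks C γ) (t : ℝ) : deriv (deriv γ) t = 0 := by
  by_contra ha
  have hk : 0 < -mink (deriv (deriv γ) t) (deriv (deriv γ) t) :=
    neg_pos.2 <| mink_self_neg_of_orthogonal ((hunit t).symm ▸ one_pos)
      (mink_deriv_deriv_deriv_eq_zero hγ hunit t) ha
  obtain ⟨A, β, hA, hβ, hsA, hsβ, hA0, δ, hδ, hAβ⟩ := exists_profile hk
  obtain ⟨w, v, hw, hbounded, htube⟩ := exists_rescaled_covectors hγ hunit t hδ
  exact not_tracks_of_profileField hC hA hβ hsA hsβ hA0 hAβ hw hbounded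
    (by simpa only [neg_mul, neg_div, ← sub_eq_add_neg] using htube) htr

/-- Tracked curves are geodesics. -/
theorem tracking_implies_geodesic (γ : ℝ → Vec4) (hγ : ContDiff ℝ (⊤ : ℕ∞) γ)
    (hunit : ∀ t : ℝ, mink (deriv γ t) (deriv γ t) = 1)
    (htl : ∀ t : ℝ, FutureTimelike (deriv γ t))
    (C : Set (Vec4 → Mat4))
    (hC : ∀ T ∈ C, SmoothMatField T ∧ SymValued T ∧ (∀ p, DEC (T p)) ∧ DivFree T)
    (htr : Tracks C γ) :
    ∀ t : ℝ, deriv (deriv γ) t = 0 :=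
  tracking_implies_geodesic_general (contDiff_infty.1 hγ 2) hunit
    (fun T hT => ⟨fun a b => ((hC T hT).1 a b).of_le (by simp), (hC T hT).2.1, (hC T hT).2.2.2⟩) htr
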